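/- Let n ≥ 2, let G ⊆ ℝⁿ be open, let l, m ∈ {0,…,n}, let u be an l-form on G with components in L¹_loc possessing a weak coderivative δu with components in L¹_loc, and let v be a C¹ m-form on G. Then the (l−m)-form v∨u possesses a weak coderivative in L¹_loc and δ(v∨u) = (−1)^{l−m} dv∨u + v∨δu almost everywhere in G. -/

import Mathlib

noncomputable section

open MeasureTheory Finset

namespace EMPaper

/-- Points of `ℝⁿ`. -/
abbrev Pt (n : ℕ) := Fin n → ℝ

/-- A graded element of the complexified exterior algebra `Λ ℝⁿ ⊗ ℂ`, encoded by its
coefficients on the basis monomials `dx^{α₁} ∧ ⋯ ∧ dx^{α_l}`, indexed by the set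
`{α₁ < ⋯ < α_l} ⊆ Fin n`. -/
abbrev GF (n : ℕ) := Finset (Fin n) → ℂ

/-- A graded differential form on `ℝⁿ`. -/
abbrev Form (n : ℕ) := Pt n → GF n

variable {n : ℕ}

/-- The sign `(-1)^{#{(i,j) ∈ I × J : j < i}}` obtained when merging the increasing
enumerations of the disjoint sets `I` and `J`. -/
def msgn (I J : Finset (Fin n)) : ℂ :=
  (-1 : ℂ) ^ (((I ×ˢ J).filter fun p => p.2 < p.1).card)

/-- The wedge (exterior) product. -/
def wedge (u v : GF n) : GF n := fun S =>
  ∑ I ∈ S.powerset, msgn I (S \ I) * u I * v (S \ I)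

/-- The vee product, determined by `⟨w, v ∨ u⟩ = ⟨w ∧ v, u⟩`. -/
def vee (v u : GF n) : GF n := fun I =>
  ∑ J ∈ (univ \ I).powerset, msgn I J * v J * u (I ∪ J)

/-- The ℂ-bilinear (non-Hermitian) inner product for which the basis monomials are
orthonormal. -/
def ginner (u v : GF n) : ℂ := ∑ S : Finset (Fin n), u S * v S

/-- Componentwise complex conjugation. -/
def gconj (u : GF n) : GF n := fun S => (starRingEnd ℂ) (u S)

/-- Projection onto the degree-`l` part. -/
def proj (l : ℕ) (u : GF n) : GF n := fun S => if S.card = l then u S else 0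

/-- `u` is homogeneous of degree `l` (an element of `Λ^l`). -/
def IsGrade (l : ℕ) (u : GF n) : Prop := ∀ S : Finset (Fin n), S.card ≠ l → u S = 0

/-- The basis one-form `dx^j`. -/
def dxe (j : Fin n) : GF n := fun S => if S = {j} then 1 else 0

/-- The one-form with components `c j`. -/
def oneG (c : Fin n → ℂ) : GF n := fun S => ∑ j, if S = {j} then c j else 0

/-- `Σ_l (-1)^l u^l`. -/
def altSign (u : GF n) : GF n := fun S => (-1 : ℂ) ^ S.card * u S

/-- Exterior derivative `du = Σ_j dx^j ∧ ∂_j u`, expressed in terms of the family of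
partial derivatives `D j = ∂_j u` at a point. -/
def gd (D : Fin n → GF n) : GF n := fun S => ∑ j, wedge (dxe j) (D j) S

/-- Coderivative `δu = (-1)^l Σ_j dx^j ∨ ∂_j u` (degreewise on graded forms), expressed
in terms of the family of partial derivatives `D j = ∂_j u` at a point. -/
def gdel (D : Fin n → GF n) : GF n := fun S =>
  (-1 : ℂ) ^ (S.card + 1) * ∑ j, vee (dxe j) (D j) S

/-- Classical partial derivative `∂_{x^j}` of a complex-valued function. -/
def pd (j : Fin n) (f : Pt n → ℂ) : Pt n → ℂ := fun x => fderiv ℝ f x (Pi.single j 1)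

/-- Componentwise classical partial derivatives of a graded form. -/
def Dcl (φ : Form n) : Fin n → Form n := fun j x S => pd j (fun y => φ y S) x

/-- A test function: smooth and compactly supported. -/
def IsTest (φ : Pt n → ℂ) : Prop := ContDiff ℝ (⊤ : ℕ∞) φ ∧ HasCompactSupport φ

/-- A graded form all of whose components are test functions. -/
def TestForm (φ : Form n) : Prop := ∀ S : Finset (Fin n), IsTest fun x => φ x S

/-- `f ∈ L²_loc(ℝⁿ)`. -/
def L2loc (f : Pt n → ℂ) : Prop :=
  AEStronglyMeasurable f (volume : Measure (Pt n)) ∧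
    ∀ K : Set (Pt n), IsCompact K → IntegrableOn (fun x => ‖f x‖ ^ 2) K volume

/-- `g` is the weak `j`-th partial derivative of `f` on `ℝⁿ`. -/
def HasWeakPD (j : Fin n) (f g : Pt n → ℂ) : Prop :=
  ∀ φ : Pt n → ℂ, IsTest φ → ∫ x, g x * φ x = -∫ x, f x * pd j φ x

/-- All components of the graded form `w` belong to `H¹_loc(ℝⁿ)`, with weak partial
derivatives given componentwise by the family `Dw`. -/
def H1locWith (w : Form n) (Dw : Fin n → Form n) : Prop :=
  (∀ S : Finset (Fin n), L2loc fun x => w x S) ∧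
    (∀ (j : Fin n) (S : Finset (Fin n)),
      HasWeakPD j (fun x => w x S) fun x => Dw j x S) ∧
    ∀ (j : Fin n) (S : Finset (Fin n)), L2loc fun x => Dw j x S

/-- A test function supported in the open set `G`. -/
def IsTestOn (G : Set (Pt n)) (φ : Pt n → ℂ) : Prop :=
  ContDiff ℝ (⊤ : ℕ∞) φ ∧ HasCompactSupport φ ∧ tsupport φ ⊆ G

/-- `g` is the weak `j`-th partial derivative of `f` on the open set `G`. -/
def HasWeakPDOn (G : Set (Pt n)) (j : Fin n) (f g : Pt n → ℂ) : Prop :=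
  ∀ φ : Pt n → ℂ, IsTestOn G φ → ∫ x in G, g x * φ x = -∫ x in G, f x * pd j φ x

/-- `f ∈ L²_loc(G)`. -/
def L2locOn (G : Set (Pt n)) (f : Pt n → ℂ) : Prop :=
  AEStronglyMeasurable f (volume.restrict G) ∧
    ∀ K : Set (Pt n), K ⊆ G → IsCompact K → IntegrableOn (fun x => ‖f x‖ ^ 2) K volume

/-- `f ∈ L¹_loc(G)`. -/
def L1locOn (G : Set (Pt n)) (f : Pt n → ℂ) : Prop :=
  MeasureTheory.LocallyIntegrableOn f G volume
/-- A graded form all of whose components are test functions supported in `G`. -/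
def TestFormOn (G : Set (Pt n)) (φ : Form n) : Prop :=
  ∀ S : Finset (Fin n), IsTestOn G fun x => φ x S

open Filter
open scoped Topology ContDiff Convolution

/-! The vee product by `v` is adjoint to `φ ↦ φ ∧ v`, and the graded Leibniz rule reads
`d(φ ∧ v) = dφ ∧ v + φ' ∧ dv`, where `φ'` is `φ` with its degree-`k` part multiplied by `(-1)^k`.
Pairing with `u` gives `⟨u, d(φ ∧ v)⟩ = ⟨v ∨ u, dφ⟩ + ⟨dv ∨ u, φ'⟩`, so the claim is the definition
of `δu` tested on `φ ∧ v`. That form has compact support in `G` but is only `C¹`; since it is a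
uniform limit of test forms together with its derivatives, it is still admissible. The sign is
carried by `φ'`: on the only degree `l - m - 1` where `dv ∨ u` lives it equals `-(-1)^(l-m)`. -/

section Mollification

variable {E F : Type*} [NormedAddCommGroup E] [NormedSpace ℝ E] [FiniteDimensional ℝ E]
  [NormedAddCommGroup F] [NormedSpace ℝ F]

section Convolution

variable [MeasurableSpace E] [BorelSpace E] (μ : Measure E) [μ.IsAddHaarMeasure]

theorem tsupport_normed_convolution_subset (φ : ContDiffBump (0 : E)) (f : E → F) :
    tsupport (φ.normed μ ⋆[ContinuousLinearMap.lsmul ℝ ℝ, μ] f) ⊆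
      Metric.cthickening φ.rOut (tsupport f) := by
  refine closure_minimal (fun x hx => ?_) Metric.isClosed_cthickening
  obtain ⟨y, hy, z, hz, rfl⟩ := Set.mem_add.mp (support_convolution_subset_swap _ hx)
  rw [φ.support_normed_eq, mem_ball_zero_iff] at hz
  refine Metric.mem_cthickening_of_dist_le _ y _ _ (subset_tsupport f hy) ?_
  rw [dist_self_add_left]
  exact hz.le

theorem fderiv_normed_convolution (φ : ContDiffBump (0 : E)) {f : E → F} (hf : ContDiff ℝ 1 f)
    (hfc : HasCompactSupport f) :
    fderiv ℝ (φ.normed μ ⋆[ContinuousLinearMap.lsmul ℝ ℝ, μ] f) =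
      φ.normed μ ⋆[ContinuousLinearMap.lsmul ℝ ℝ, μ] fderiv ℝ f := by
  funext x
  exact (hfc.hasFDerivAt_convolution_right _ φ.continuous_normed.locallyIntegrable hf x).fderiv

theorem tendstoUniformly_normed_convolution [CompleteSpace F] {ι : Type*} {l : Filter ι}
    {φ : ι → ContDiffBump (0 : E)} (hφ : Tendsto (fun i => (φ i).rOut) l (𝓝 0)) {f : E → F}
    (hf : UniformContinuous f) :
    TendstoUniformly (fun i => (φ i).normed μ ⋆[ContinuousLinearMap.lsmul ℝ ℝ, μ] f) f l := by
  rw [Metric.tendstoUniformly_iff]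
  intro ε hε
  obtain ⟨δ, hδ, hfδ⟩ := Metric.uniformContinuous_iff.mp hf (ε / 2) (half_pos hε)
  filter_upwards [hφ.eventually_lt_const hδ] with i hi x
  rw [dist_comm]
  refine ((φ i).dist_normed_convolution_le hf.continuous.aestronglyMeasurable
    fun y hy => ?_).trans_lt (half_lt_self hε)
  exact (hfδ (lt_trans hy hi)).le

end Convolution

theorem exists_contDiff_tendstoUniformly_fderiv [CompleteSpace F] {f : E → F}
    (hf : ContDiff ℝ 1 f) (hfc : HasCompactSupport f) {U : Set E} (hU : IsOpen U)
    (hfU : tsupport f ⊆ U) :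
    ∃ K ⊆ U, IsCompact K ∧ ∃ g : ℕ → E → F,
      (∀ i, ContDiff ℝ ∞ (g i)) ∧ (∀ i, tsupport (g i) ⊆ K) ∧
      TendstoUniformly g f atTop ∧
      TendstoUniformly (fun i => fderiv ℝ (g i)) (fderiv ℝ f) atTop := by
  borelize E
  let μ : Measure E := .addHaar
  obtain ⟨r, hr, hrU⟩ := hfc.isCompact.exists_cthickening_subset_open hU hfU
  obtain ⟨ρ, -, hρ, hρ0⟩ := exists_seq_strictAnti_tendsto' hr
  let φ (i : ℕ) : ContDiffBump (0 : E) :=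
    ⟨ρ i / 2, ρ i, half_pos (hρ i).1, half_lt_self (hρ i).1⟩
  refine ⟨_, hrU, hfc.isCompact.cthickening,
    fun i => (φ i).normed μ ⋆[ContinuousLinearMap.lsmul ℝ ℝ, μ] f, fun i => ?_, fun i => ?_, ?_, ?_⟩
  · exact (φ i).hasCompactSupport_normed.contDiff_convolution_left _
      (φ i).contDiff_normed hf.continuous.locallyIntegrable
  · exact (tsupport_normed_convolution_subset μ (φ i) f).trans
      (Metric.cthickening_mono (hρ i).2.le _)
  · exact tendstoUniformly_normed_convolution μ (φ := φ) hρ0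
      (hfc.uniformContinuous_of_continuous hf.continuous)
  · simp only [fderiv_normed_convolution μ _ hf hfc]
    exact tendstoUniformly_normed_convolution μ (φ := φ) hρ0
      ((hfc.fderiv ℝ).uniformContinuous_of_continuous (hf.continuous_fderiv one_ne_zero))

end Mollification

section MergeSign

variable {I J K : Finset (Fin n)}

theorem msgn_union_left (h : Disjoint I J) : msgn (I ∪ J) K = msgn I K * msgn J K := by
  rw [msgn, msgn, msgn, ← pow_add, union_product, filter_union, card_union_of_disjoint]
  exact disjoint_filter_filter (disjoint_product.mpr (.inl h))

theorem msgn_union_right (h : Disjoint J K) : msgn I (J ∪ K) = msgn I J * msgn I K := by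
  rw [msgn, msgn, msgn, ← pow_add, product_union, filter_union, card_union_of_disjoint]
  exact disjoint_filter_filter (disjoint_product.mpr (.inr h))

theorem msgn_mul_msgn_swap (h : Disjoint I J) :
    msgn I J * msgn J I = (-1) ^ (#I * #J) := by
  have hswap : #((J ×ˢ I).filter fun p => p.2 < p.1) = #((I ×ˢ J).filter fun p => ¬p.2 < p.1) := by
    refine card_bij' (fun p _ => p.swap) (fun p _ => p.swap) ?_ ?_ ?_ ?_ <;>
      grind [Finset.disjoint_left]
  rw [msgn, msgn, ← pow_add, hswap, card_filter_add_card_filter_not, card_product]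

theorem msgn_mul_self (I J : Finset (Fin n)) : msgn I J * msgn I J = 1 := by
  rw [msgn, ← mul_pow, neg_one_mul, neg_neg, one_pow]

theorem msgn_comm (h : Disjoint I J) : msgn I J = (-1) ^ (#I * #J) * msgn J I := by
  rw [← msgn_mul_msgn_swap h, mul_assoc, msgn_mul_self, mul_one]

end MergeSign

section ExteriorAlgebra

variable {k l m : ℕ} {a b u v : GF n}

theorem wedge_assoc (a b c : GF n) : wedge (wedge a b) c = wedge a (wedge b c) := by
  funext S
  simp only [wedge, mul_sum, sum_mul, sum_sigma']
  refine sum_bij' (fun p _ => ⟨p.2, p.1 \ p.2⟩) (fun p _ => ⟨p.1 ∪ p.2, p.1⟩) ?_ ?_ ?_ ?_ ?_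
  · grind
  · grind
  · rintro ⟨I, A⟩ h
    have hI : A ∪ I \ A = I := by grind
    simp only [hI]
  · rintro ⟨A, B⟩ h
    have hB : (A ∪ B) \ A = B := by grind
    simp only [hB]
  · rintro ⟨I, A⟩ h
    obtain ⟨hIS, hAI⟩ : I ⊆ S ∧ A ⊆ I := by grind
    obtain ⟨B, hAB, rfl⟩ : ∃ B, Disjoint A B ∧ A ∪ B = I :=
      ⟨I \ A, disjoint_sdiff, union_sdiff_of_subset hAI⟩
    have hB : (A ∪ B) \ A = B := union_sdiff_cancel_left hAB
    have hC : (S \ A) \ B = S \ (A ∪ B) := sdiff_sdiff_left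
    have hBC : S \ A = B ∪ S \ (A ∪ B) := by grind [Finset.disjoint_left]
    have hdisj : Disjoint B (S \ (A ∪ B)) := by grind [Finset.disjoint_left]
    simp only [hB, hC, msgn_union_left hAB]
    rw [hBC, msgn_union_right hdisj]
    ring

theorem ginner_vee (v u w : GF n) : ginner (vee v u) w = ginner u (wedge w v) := by
  simp only [ginner, vee, wedge, mul_sum, sum_mul, sum_sigma']
  refine sum_bij' (fun p _ => ⟨p.1 ∪ p.2, p.1⟩) (fun p _ => ⟨p.2, p.1 \ p.2⟩) ?_ ?_ ?_ ?_ ?_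
  · grind
  · grind
  · rintro ⟨I, J⟩ h
    have hJ : (I ∪ J) \ I = J := by grind
    simp only [hJ]
  · rintro ⟨S, I⟩ h
    have hS : I ∪ S \ I = S := by grind
    simp only [hS]
  · rintro ⟨I, J⟩ h
    have hJ : (I ∪ J) \ I = J := by grind
    simp only [hJ]
    ring

theorem wedge_comm_of_isGrade_one (ha : IsGrade 1 a) (b : GF n) :
    wedge a b = wedge (altSign b) a := by
  funext S
  refine sum_bij' (fun I _ => S \ I) (fun I _ => S \ I) ?_ ?_ ?_ ?_ fun I hI => ?_
  · grind
  · grind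
  · grind
  · grind
  · rw [Finset.sdiff_sdiff_eq_self (mem_powerset.mp hI)]
    by_cases hI1 : #I = 1
    · rw [msgn_comm disjoint_sdiff, hI1, one_mul, altSign]
      ring
    · rw [ha I hI1, mul_zero, zero_mul, mul_zero]

theorem isGrade_dxe (j : Fin n) : IsGrade 1 (dxe j) := by
  intro S hS
  rw [dxe, if_neg]
  rintro rfl
  exact hS (card_singleton j)

theorem isGrade_wedge (ha : IsGrade k a) (hb : IsGrade m b) : IsGrade (k + m) (wedge a b) := by
  intro S hS
  refine sum_eq_zero fun I hI => ?_
  rw [mem_powerset] at hI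
  have hcard := card_sdiff_add_card_eq_card hI
  by_cases hIk : #I = k
  · rw [hb _ (by lia), mul_zero]
  · rw [ha _ hIk, mul_zero, zero_mul]

theorem vee_apply_eq_zero (hv : IsGrade m v) (hu : IsGrade l u) {S : Finset (Fin n)}
    (hS : #S + m ≠ l) : vee v u S = 0 := by
  refine sum_eq_zero fun J hJ => ?_
  have hSJ : #(S ∪ J) = #S + #J := card_union_of_disjoint (by grind [Finset.disjoint_left])
  by_cases hJm : #J = m
  · rw [hu _ (by lia), mul_zero]
  · rw [hv _ hJm, mul_zero, zero_mul]

theorem neg_altSign_vee (hv : IsGrade (m + 1) v) (hu : IsGrade l u) :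
    -altSign (vee v u) = (-1 : ℂ) ^ (l - m) • vee v u := by
  funext S
  simp only [Pi.neg_apply, Pi.smul_apply, altSign, smul_eq_mul]
  by_cases hS : #S + (m + 1) = l
  · rw [show l - m = #S + 1 by lia, pow_succ]
    ring
  · rw [vee_apply_eq_zero hv hu hS, mul_zero, mul_zero, neg_zero]

theorem ginner_add_right (a b c : GF n) : ginner a (b + c) = ginner a b + ginner a c := by
  simp only [ginner, Pi.add_apply, mul_add, sum_add_distrib]

theorem ginner_sub_left (a b c : GF n) : ginner (a - b) c = ginner a c - ginner b c := by
  simp only [ginner, Pi.sub_apply, sub_mul, sum_sub_distrib]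

theorem ginner_altSign (a b : GF n) : ginner (altSign a) b = ginner a (altSign b) :=
  sum_congr rfl fun S _ => by rw [altSign, altSign]; ring

theorem ginner_proj_right (ha : IsGrade k a) (b : GF n) : ginner a (proj k b) = ginner a b := by
  refine sum_congr rfl fun S _ => ?_
  by_cases hS : #S = k
  · rw [proj, if_pos hS]
  · rw [ha S hS, zero_mul, zero_mul]

theorem norm_ginner_le (a b : GF n) : ‖ginner a b‖ ≤ (∑ S, ‖a S‖) * ‖b‖ := by
  rw [sum_mul]
  refine norm_sum_le_of_le _ fun S _ => ?_
  rw [norm_mul]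
  gcongr
  exact norm_le_pi_norm b S

/-- The wedge product as a continuous real-bilinear map. -/
def wedgeCLM : GF n →L[ℝ] GF n →L[ℝ] GF n :=
  (LinearMap.mk₂ ℝ wedge
    (fun a a' b => by funext S; simp only [wedge, Pi.add_apply, mul_add, add_mul, sum_add_distrib])
    (fun r a b => by
      funext S
      simp only [wedge, Pi.smul_apply, mul_smul_comm, smul_mul_assoc, smul_sum])
    (fun a b b' => by funext S; simp only [wedge, Pi.add_apply, mul_add, sum_add_distrib])
    (fun r a b => by
      funext S
      simp only [wedge, Pi.smul_apply, mul_smul_comm, smul_sum])).toContinuousBilinearMap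

@[simp]
theorem wedgeCLM_apply (a b : GF n) : wedgeCLM a b = wedge a b := rfl

theorem gd_eq_sum (D : Fin n → GF n) : gd D = ∑ j, wedge (dxe j) (D j) := by
  funext S
  rw [gd, Finset.sum_apply]

theorem isGrade_gd {D : Fin n → GF n} (hD : ∀ j, IsGrade k (D j)) : IsGrade (k + 1) (gd D) := by
  intro S hS
  refine sum_eq_zero fun j _ => isGrade_wedge (isGrade_dxe j) (hD j) S ?_
  rwa [add_comm]

theorem ginner_gd_proj (hu : IsGrade l u) (D : Fin n → GF n) :
    ginner u (gd fun j => proj (l - 1) (D j)) = ginner u (gd D) := by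
  refine sum_congr rfl fun S _ => ?_
  by_cases hS : #S = l
  · congr 1
    refine sum_congr rfl fun j _ => sum_congr rfl fun I hI => ?_
    by_cases hIj : I = {j}
    · have hcard : #(S \ I) = l - 1 := by
        rw [card_sdiff_of_subset (mem_powerset.mp hI), hS, hIj, card_singleton]
      simp only [proj, if_pos hcard]
    · rw [dxe, if_neg hIj, mul_zero, zero_mul, zero_mul]
  · rw [hu S hS, zero_mul, zero_mul]

end ExteriorAlgebra

section ExteriorDerivative

variable {m : ℕ} {φ v : Form n} {x : Pt n}

/-- The classical exterior derivative `dφ` of a graded form, as the form `x ↦ dφ(x)`. -/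
abbrev exteriorDeriv (φ : Form n) : Form n := fun x => gd fun j => Dcl φ j x

/-- The linear map `A ↦ Σ_j dx^j ∧ A e_j`, which takes the total derivative of a graded form to its
exterior derivative. -/
def exteriorSymbol : (Pt n →L[ℝ] GF n) →L[ℝ] GF n :=
  ∑ j, (wedgeCLM (dxe j)).comp (ContinuousLinearMap.apply ℝ (GF n) (Pi.single j 1))

theorem exteriorSymbol_apply (A : Pt n →L[ℝ] GF n) :
    exteriorSymbol A = ∑ j, wedge (dxe j) (A (Pi.single j 1)) := by
  simp [exteriorSymbol]

theorem Dcl_eq_fderiv (hφ : DifferentiableAt ℝ φ x) (j : Fin n) :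
    Dcl φ j x = fderiv ℝ φ x (Pi.single j 1) := by
  funext S
  exact DFunLike.congr_fun (fderiv_apply hφ S) _

theorem exteriorDeriv_eq (hφ : DifferentiableAt ℝ φ x) :
    exteriorDeriv φ x = exteriorSymbol (fderiv ℝ φ x) := by
  simp only [exteriorDeriv, gd_eq_sum, exteriorSymbol_apply, Dcl_eq_fderiv hφ]

theorem exteriorDeriv_eq_comp_fderiv (hφ : Differentiable ℝ φ) :
    exteriorDeriv φ = exteriorSymbol ∘ fderiv ℝ φ :=
  funext fun x => exteriorDeriv_eq (hφ x)

theorem Dcl_wedge (hφ : DifferentiableAt ℝ φ x) (hv : DifferentiableAt ℝ v x) (j : Fin n) :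
    Dcl (fun y => wedge (φ y) (v y)) j x = wedge (φ x) (Dcl v j x) + wedge (Dcl φ j x) (v x) := by
  have hφv := wedgeCLM.hasFDerivAt_of_bilinear hφ.hasFDerivAt hv.hasFDerivAt
  rw [Dcl_eq_fderiv hφ, Dcl_eq_fderiv hv]
  exact (Dcl_eq_fderiv hφv.differentiableAt j).trans (DFunLike.congr_fun hφv.fderiv _)

theorem exteriorDeriv_wedge (hφ : DifferentiableAt ℝ φ x) (hv : DifferentiableAt ℝ v x) :
    exteriorDeriv (fun y => wedge (φ y) (v y)) x =
      wedge (exteriorDeriv φ x) (v x) + wedge (altSign (φ x)) (exteriorDeriv v x) := by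
  have hterm (j : Fin n) :
      wedge (dxe j) (Dcl (fun y => wedge (φ y) (v y)) j x) =
        wedge (wedge (dxe j) (Dcl φ j x)) (v x) +
          wedge (altSign (φ x)) (wedge (dxe j) (Dcl v j x)) := by
    rw [Dcl_wedge hφ hv, ← wedgeCLM_apply (dxe j), map_add, wedgeCLM_apply, wedgeCLM_apply,
      ← wedge_assoc, wedge_comm_of_isGrade_one (isGrade_dxe j), wedge_assoc, ← wedge_assoc (dxe j),
      add_comm]
  simp only [exteriorDeriv, gd_eq_sum, hterm, sum_add_distrib]
  simp only [← wedgeCLM_apply, map_sum, _root_.sum_apply]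

theorem ginner_exteriorDeriv_wedge (u : GF n) (hφ : DifferentiableAt ℝ φ x)
    (hv : DifferentiableAt ℝ v x) :
    ginner u (exteriorDeriv (fun y => wedge (φ y) (v y)) x) =
      ginner (vee (v x) u) (exteriorDeriv φ x) +
        ginner (altSign (vee (exteriorDeriv v x) u)) (φ x) := by
  rw [exteriorDeriv_wedge hφ hv, ginner_add_right, ginner_altSign, ginner_vee, ginner_vee]

theorem contDiff_wedge_of_tsupport_subset {G : Set (Pt n)} {r : WithTop ℕ∞} (hG : IsOpen G)
    (hφ : ContDiff ℝ r φ) (hφG : tsupport φ ⊆ G) (hv : ContDiffOn ℝ r v G) :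
    ContDiff ℝ r fun x => wedge (φ x) (v x) := by
  refine contDiff_iff_contDiffAt.mpr fun x => ?_
  by_cases hx : x ∈ G
  · exact wedgeCLM.isBoundedBilinearMap.contDiff.contDiffAt.comp x
      (hφ.contDiffAt.prodMk (hv.contDiffAt (hG.mem_nhds hx)))
  · refine (contDiffAt_const (c := 0)).congr_of_eventuallyEq ?_
    filter_upwards [notMem_tsupport_iff_eventuallyEq.mp fun h => hx (hφG h)] with y hy
    rw [hy, Pi.zero_apply, ← wedgeCLM_apply, map_zero, zero_apply]

theorem tsupport_wedge_subset (φ v : Form n) :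
    tsupport (fun x => wedge (φ x) (v x)) ⊆ tsupport φ := by
  refine closure_mono fun x hx hφx => hx ?_
  change wedgeCLM (φ x) (v x) = 0
  rw [hφx, map_zero, zero_apply]

theorem continuous_exteriorDeriv (hφ : ContDiff ℝ 1 φ) : Continuous (exteriorDeriv φ) := by
  rw [exteriorDeriv_eq_comp_fderiv (hφ.differentiable one_ne_zero)]
  exact exteriorSymbol.continuous.comp (hφ.continuous_fderiv one_ne_zero)

theorem continuousOn_exteriorDeriv {G : Set (Pt n)} (hG : IsOpen G) (hv : ContDiffOn ℝ 1 v G) :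
    ContinuousOn (exteriorDeriv v) G := by
  refine (exteriorSymbol.continuous.comp_continuousOn
    (hv.continuousOn_fderiv_of_isOpen hG le_rfl)).congr fun x hx => exteriorDeriv_eq ?_
  exact (hv.contDiffAt (hG.mem_nhds hx)).differentiableAt one_ne_zero

theorem tsupport_exteriorDeriv_subset (φ : Form n) : tsupport (exteriorDeriv φ) ⊆ tsupport φ := by
  refine closure_minimal (fun x hx => ?_) (isClosed_tsupport φ)
  contrapose! hx
  have hφ : φ =ᶠ[𝓝 x] 0 := notMem_tsupport_iff_eventuallyEq.mp hx
  have hφx : DifferentiableAt ℝ φ x := (differentiableAt_const 0).congr_of_eventuallyEq hφ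
  rw [Function.notMem_support, exteriorDeriv_eq hφx, hφ.fderiv_eq, fderiv_zero, Pi.zero_apply,
    map_zero]

theorem isGrade_Dcl (hv : ∀ x, IsGrade m (v x)) (j : Fin n) (x : Pt n) :
    IsGrade m (Dcl v j x) := by
  intro S hS
  simp [Dcl, pd, funext fun y => hv y S hS]

theorem Dcl_proj (l : ℕ) (φ : Form n) (j : Fin n) (x : Pt n) :
    Dcl (fun y => proj l (φ y)) j x = proj l (Dcl φ j x) := by
  funext S
  by_cases hS : #S = l <;> simp [Dcl, pd, proj, hS]

end ExteriorDerivative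

section TestForms

variable {G : Set (Pt n)} {φ : Form n}

theorem tsupport_eq_iUnion_component (φ : Form n) :
    tsupport φ = ⋃ S : Finset (Fin n), tsupport fun x => φ x S := by
  simp only [tsupport]
  rw [← closure_iUnion_of_finite]
  congr 1
  ext x
  simp [Function.ne_iff]

theorem testFormOn_iff :
    TestFormOn G φ ↔ ContDiff ℝ ∞ φ ∧ HasCompactSupport φ ∧ tsupport φ ⊆ G := by
  have hcompact : HasCompactSupport φ ↔ ∀ S, HasCompactSupport fun x => φ x S := by
    refine ⟨fun h S => h.comp_left (g := fun a : GF n => a S) rfl, fun h => ?_⟩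
    rw [HasCompactSupport, tsupport_eq_iUnion_component]
    exact isCompact_iUnion h
  rw [contDiff_pi, hcompact, tsupport_eq_iUnion_component, Set.iUnion_subset_iff,
    ← forall_and, ← forall_and]
  rfl

theorem TestFormOn.proj (hφ : TestFormOn G φ) (l : ℕ) :
    TestFormOn G fun x => proj l (φ x) := by
  intro S
  by_cases hS : #S = l
  · simpa only [EMPaper.proj, if_pos hS] using hφ S
  · simp only [EMPaper.proj, if_neg hS]
    exact ⟨contDiff_const, .zero, by simp [tsupport]⟩

end TestForms

section LocallyIntegrableForms

variable {G K : Set (Pt n)} {u v w : Form n}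

theorem l1locOn_vee (hG : IsOpen G) (hv : ContinuousOn v G)
    (hu : ∀ S, L1locOn G fun x => u x S) (S : Finset (Fin n)) :
    L1locOn G fun x => vee (v x) (u x) S := by
  refine (locallyIntegrableOn_iff hG.isLocallyClosed).mpr fun K hKG hK =>
    integrable_finsetSum _ fun J _ => ?_
  have hvJ : ContinuousOn (fun x => msgn S J * v x J) K :=
    continuousOn_const.mul ((continuous_apply J).comp_continuousOn (hv.mono hKG))
  exact ((hu (S ∪ J)).integrableOn_compact_subset hKG hK).continuousOn_mul hvJ hK

theorem l1locOn_altSign_vee_exteriorDeriv (hG : IsOpen G) (hv : ContDiffOn ℝ 1 v G)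
    (hu : ∀ S, L1locOn G fun x => u x S) (S : Finset (Fin n)) :
    L1locOn G fun x => altSign (vee (exteriorDeriv v x) (u x)) S :=
  (l1locOn_vee hG (continuousOn_exteriorDeriv hG hv) hu S).smul ((-1 : ℂ) ^ #S)

theorem integrableOn_ginner (hG : IsOpen G) (hu : ∀ S, L1locOn G fun x => u x S)
    (hw : Continuous w) (hwc : HasCompactSupport w) (hwG : tsupport w ⊆ G) :
    IntegrableOn (fun x => ginner (u x) (w x)) G := by
  refine integrable_finsetSum _ fun S _ => ?_
  have hwS : ContinuousOn (fun x => w x S) (tsupport w) :=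
    ((continuous_apply S).comp hw).continuousOn
  have hloc := (hu S).integrableOn_compact_subset hwG hwc
  refine (hloc.mul_continuousOn hwS hwc).of_forall_sdiff_eq_zero hG.measurableSet fun x hx => ?_
  rw [image_eq_zero_of_notMem_tsupport hx.2, Pi.zero_apply, mul_zero]

theorem tendsto_integral_ginner {ι : Type*} {l : Filter ι} [l.IsCountablyGenerated]
    {μ : Measure (Pt n)} (hu : ∀ S, Integrable (fun x => u x S) μ) {W : ι → Form n}
    (hW : ∀ i, AEStronglyMeasurable (W i) μ) {C : ℝ} (hw : ∀ᵐ x ∂μ, ‖w x‖ ≤ C)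
    (hlim : TendstoUniformly W w l) :
    Tendsto (fun i => ∫ x, ginner (u x) (W i x) ∂μ) l (𝓝 (∫ x, ginner (u x) (w x) ∂μ)) := by
  refine tendsto_integral_filter_of_dominated_convergence
    (fun x => (∑ S, ‖u x S‖) * (C + 1)) (.of_forall fun i => ?_) ?_ ?_ ?_
  · exact Finset.aestronglyMeasurable_fun_sum _ fun S _ =>
      (hu S).1.mul ((continuous_apply S).comp_aestronglyMeasurable (hW i))
  · filter_upwards [Metric.tendstoUniformly_iff.mp hlim 1 one_pos] with i hi
    filter_upwards [hw] with x hx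
    have hclose : ‖w x - W i x‖ ≤ 1 := dist_eq_norm (w x) (W i x) ▸ (hi x).le
    have hWx : ‖W i x‖ ≤ C + 1 :=
      (norm_le_norm_add_norm_sub (w x) (W i x)).trans (add_le_add hx hclose)
    exact (norm_ginner_le _ _).trans (by gcongr)
  · exact (integrable_finsetSum _ fun S _ => (hu S).norm).mul_const _
  · refine .of_forall fun x => tendsto_finsetSum _ fun S _ => ?_
    exact (tendsto_pi_nhds.mp (hlim.tendsto_at x) S).const_mul _

theorem tendsto_setIntegral_ginner {ι : Type*} {l : Filter ι} [l.IsCountablyGenerated] [l.NeBot]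
    (hG : IsOpen G) (hu : ∀ S, L1locOn G fun x => u x S) (hK : IsCompact K) (hKG : K ⊆ G)
    {W : ι → Form n} (hW : ∀ i, Continuous (W i)) (hWK : ∀ i, tsupport (W i) ⊆ K)
    (hlim : TendstoUniformly W w l) :
    Tendsto (fun i => ∫ x in G, ginner (u x) (W i x)) l (𝓝 (∫ x in G, ginner (u x) (w x))) := by
  have hW0 (i : ι) {x : Pt n} (hx : x ∉ K) : W i x = 0 :=
    image_eq_zero_of_notMem_tsupport fun h => hx (hWK i h)
  have hw0 {x : Pt n} (hx : x ∉ K) : w x = 0 :=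
    tendsto_nhds_unique (hlim.tendsto_at x) (by simp only [hW0 _ hx, tendsto_const_nhds])
  have hrestrict {w : Form n} (hw : ∀ {x}, x ∉ K → w x = 0) :
      ∫ x in G, ginner (u x) (w x) = ∫ x in K, ginner (u x) (w x) :=
    setIntegral_eq_of_subset_of_forall_sdiff_eq_zero hG.measurableSet hKG fun x hx => by
      simp [ginner, hw hx.2]
  obtain ⟨C, hC⟩ := hK.exists_bound_of_continuousOn
    (hlim.continuous (.of_forall hW)).continuousOn
  simp only [hrestrict hw0, hrestrict (hW0 _)]
  exact tendsto_integral_ginner (fun S => (hu S).integrableOn_compact_subset hKG hK)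
    (fun i => (hW i).aestronglyMeasurable) (ae_restrict_of_forall_mem hK.measurableSet hC) hlim

end LocallyIntegrableForms

section WeakCoderivative

variable {G : Set (Pt n)} {u f v φ ψ : Form n}

/-- `f` is the weak coderivative `δu` on `G`: integration by parts against test forms of all degrees
at once, which makes sense for forms `u` and `f` of mixed degree. -/
def HasWeakCoderivOn (G : Set (Pt n)) (u f : Form n) : Prop :=
  ∀ φ : Form n, TestFormOn G φ →
    ∫ x in G, ginner (f x) (φ x) = ∫ x in G, ginner (u x) (exteriorDeriv φ x)

theorem HasWeakCoderivOn.of_isGrade {l : ℕ} (hu : ∀ x, IsGrade l (u x))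
    (hf : ∀ x, IsGrade (l - 1) (f x))
    (hδ : ∀ φ : Form n, TestFormOn G φ → (∀ x, IsGrade (l - 1) (φ x)) →
      ∫ x in G, ginner (f x) (φ x) = ∫ x in G, ginner (u x) (exteriorDeriv φ x)) :
    HasWeakCoderivOn G u f := by
  intro φ hφ
  have hproj := hδ _ (hφ.proj (l - 1)) fun x S hS => if_neg hS
  simpa only [exteriorDeriv, Dcl_proj, ginner_proj_right (hf _), ginner_gd_proj (hu _)] using hproj

theorem HasWeakCoderivOn.integral_eq_of_contDiff (h : HasWeakCoderivOn G u f) (hG : IsOpen G)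
    (hu : ∀ S, L1locOn G fun x => u x S) (hf : ∀ S, L1locOn G fun x => f x S)
    (hψ : ContDiff ℝ 1 ψ) (hψc : HasCompactSupport ψ) (hψG : tsupport ψ ⊆ G) :
    ∫ x in G, ginner (f x) (ψ x) = ∫ x in G, ginner (u x) (exteriorDeriv ψ x) := by
  obtain ⟨K, hKG, hK, φ, hφ, hφK, hlim, hlim'⟩ :=
    exists_contDiff_tendstoUniformly_fderiv hψ hψc hG hψG
  have hφ1 (i : ℕ) : ContDiff ℝ 1 (φ i) := (hφ i).of_le (mod_cast le_top)
  have hdlim : TendstoUniformly (fun i => exteriorDeriv (φ i)) (exteriorDeriv ψ) atTop := by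
    rw [exteriorDeriv_eq_comp_fderiv (hψ.differentiable one_ne_zero)]
    simp only [fun i => exteriorDeriv_eq_comp_fderiv ((hφ1 i).differentiable one_ne_zero)]
    exact exteriorSymbol.uniformContinuous.comp_tendstoUniformly hlim'
  have htest (i : ℕ) : TestFormOn G (φ i) := testFormOn_iff.mpr
    ⟨hφ i, hK.of_isClosed_subset (isClosed_tsupport _) (hφK i), (hφK i).trans hKG⟩
  refine tendsto_nhds_unique
    (tendsto_setIntegral_ginner hG hf hK hKG (fun i => (hφ i).continuous) hφK hlim) ?_
  simp only [h _ (htest _)]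
  exact tendsto_setIntegral_ginner hG hu hK hKG (fun i => continuous_exteriorDeriv (hφ1 i))
    (fun i => (tsupport_exteriorDeriv_subset _).trans (hφK i)) hdlim

theorem HasWeakCoderivOn.integral_vee (h : HasWeakCoderivOn G u f) (hG : IsOpen G)
    (hu : ∀ S, L1locOn G fun x => u x S) (hf : ∀ S, L1locOn G fun x => f x S)
    (hv : ContDiffOn ℝ 1 v G) (hφ : TestFormOn G φ) :
    ∫ x in G, ginner (vee (v x) (f x)) (φ x) =
      ∫ x in G, ginner (u x) (exteriorDeriv (fun y => wedge (φ y) (v y)) x) := by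
  obtain ⟨hφ, hφc, hφG⟩ := testFormOn_iff.mp hφ
  have hsupport := tsupport_wedge_subset φ v
  simp only [ginner_vee]
  exact h.integral_eq_of_contDiff hG hu hf
    (contDiff_wedge_of_tsupport_subset hG (hφ.of_le (mod_cast le_top)) hφG hv)
    (hφc.of_isClosed_subset (isClosed_tsupport _) hsupport) (hsupport.trans hφG)

theorem setIntegral_ginner_exteriorDeriv_wedge (hG : IsOpen G)
    (hu : ∀ S, L1locOn G fun x => u x S) (hv : ContDiffOn ℝ 1 v G) (hφ : TestFormOn G φ) :
    ∫ x in G, ginner (u x) (exteriorDeriv (fun y => wedge (φ y) (v y)) x) =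
      (∫ x in G, ginner (vee (v x) (u x)) (exteriorDeriv φ x)) +
        ∫ x in G, ginner (altSign (vee (exteriorDeriv v x) (u x))) (φ x) := by
  obtain ⟨hφ, hφc, hφG⟩ := testFormOn_iff.mp hφ
  have hφ1 : ContDiff ℝ 1 φ := hφ.of_le (mod_cast le_top)
  have hsupport := tsupport_exteriorDeriv_subset φ
  rw [← integral_add
    (integrableOn_ginner hG (l1locOn_vee hG hv.continuousOn hu) (continuous_exteriorDeriv hφ1)
      (hφc.of_isClosed_subset (isClosed_tsupport _) hsupport) (hsupport.trans hφG))
    (integrableOn_ginner hG (l1locOn_altSign_vee_exteriorDeriv hG hv hu) hφ.continuous hφc hφG)]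
  refine setIntegral_congr_fun hG.measurableSet fun x hx => ginner_exteriorDeriv_wedge _ ?_ ?_
  · exact hφ1.contDiffAt.differentiableAt one_ne_zero
  · exact (hv.contDiffAt (hG.mem_nhds hx)).differentiableAt one_ne_zero

end WeakCoderivative

theorem statement13_general {G : Set (Pt n)} (hG : IsOpen G) {u f v : Form n}
    (hu : ∀ S, L1locOn G fun x => u x S) (hf : ∀ S, L1locOn G fun x => f x S)
    (hδ : HasWeakCoderivOn G u f) (hv : ContDiffOn ℝ 1 v G) :
    (∀ S, L1locOn G fun x => (-altSign (vee (exteriorDeriv v x) (u x)) + vee (v x) (f x)) S) ∧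
      HasWeakCoderivOn G (fun x => vee (v x) (u x))
        fun x => -altSign (vee (exteriorDeriv v x) (u x)) + vee (v x) (f x) := by
  have hdvu := l1locOn_altSign_vee_exteriorDeriv hG hv hu
  have hvf := l1locOn_vee hG hv.continuousOn hf
  refine ⟨fun S => (hdvu S).neg.add (hvf S), fun φ hφ => ?_⟩
  obtain ⟨hφs, hφc, hφG⟩ := testFormOn_iff.mp hφ
  have hdvuφ := integrableOn_ginner hG hdvu hφs.continuous hφc hφG
  have hvfφ := integrableOn_ginner hG hvf hφs.continuous hφc hφG
  simp only [neg_add_eq_sub, ginner_sub_left]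
  rw [integral_sub hvfφ hdvuφ, hδ.integral_vee hG hu hf hv hφ,
    setIntegral_ginner_exteriorDeriv_wedge hG hu hv hφ, add_sub_cancel_right]

/-- Proposition A.3.  Let `u` be an `l`-form on `G` with components
in `L¹_loc(G)` possessing a weak coderivative `f = δu` with components in `L¹_loc(G)`,
and let `v` be a `C¹` `m`-form on `G`.  Then `v∨u` possesses a weak coderivative in
`L¹_loc(G)` and `δ(v∨u) = (−1)^{l−m} dv∨u + v∨δu` almost everywhere in `G`. -/
theorem statement13 (hn : 2 ≤ n) (G : Set (Pt n)) (hG : IsOpen G)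
    (l m : ℕ) (hl : l ≤ n) (hm : m ≤ n) (u f : Form n)
    (hu1 : ∀ S : Finset (Fin n), L1locOn G fun x => u x S)
    (hugr : ∀ x, IsGrade l (u x))
    (hf1 : ∀ S : Finset (Fin n), L1locOn G fun x => f x S)
    (hfgr : ∀ x, IsGrade (l - 1) (f x))
    (hδu : ∀ φ : Form n, TestFormOn G φ → (∀ x, IsGrade (l - 1) (φ x)) →
      ∫ x in G, ginner (f x) (φ x) = ∫ x in G, ginner (u x) (gd fun j => Dcl φ j x))
    (v : Form n) (hv : ∀ S : Finset (Fin n), ContDiffOn ℝ 1 (fun x => v x S) G)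
    (hvgr : ∀ x, IsGrade m (v x)) :
    (∀ S : Finset (Fin n), L1locOn G fun x =>
      ((-1 : ℂ) ^ (l - m) • vee (gd fun j => Dcl v j x) (u x) + vee (v x) (f x)) S) ∧
    ∀ φ : Form n, TestFormOn G φ → (∀ x, IsGrade (l - m - 1) (φ x)) →
      ∫ x in G, ginner
          ((-1 : ℂ) ^ (l - m) • vee (gd fun j => Dcl v j x) (u x) + vee (v x) (f x))
          (φ x)
        = ∫ x in G, ginner (vee (v x) (u x)) (gd fun j => Dcl φ j x) := by
  have hsign (x : Pt n) :
      (-1 : ℂ) ^ (l - m) • vee (exteriorDeriv v x) (u x) =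
        -altSign (vee (exteriorDeriv v x) (u x)) :=
    (neg_altSign_vee (isGrade_gd fun j => isGrade_Dcl hvgr j x) (hugr x)).symm
  simp only [hsign]
  obtain ⟨hloc, hδ⟩ :=
    statement13_general hG hu1 hf1 (.of_isGrade hugr hfgr hδu) (contDiffOn_pi.mpr hv)
  exact ⟨hloc, fun φ hφ _ => hδ φ hφ⟩

end EMPaper
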